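/- arXiv:1402.6856 — 2 statements merged into one kernel-verified Lean document; each statement's English description precedes it below -/
import Mathlib

section
/- Let q_1, q_2, u_1, u_3 be smooth functions of x satisfying u_2 = −(1/2)u_{1x}, and define δu_1 = −2(q_1q_2)_x, δu_3 = 2(q_1q_2)_x u_1 − 2 q_1 q_2 u_{1x} − (q_1 q_{2xx} + q_2 q_{1xx})_x, and δu_4 = 4(q_1q_2)_x u_2 − 2 q_1 q_2 u_{2x} − 3(q_2 q_{1xx} + q_1 q_{2xx}) u_1 − 6 q_{1x} q_{2x} u_1 + 2(q_1 q_2 u_{1x})_x + (q_1 q_{2xxx} + q_2 q_{1xxx})_x. Then δu_4 = (1/4)(δu_1)_{xxx} − (3/2)(δu_3)_x, i.e. the ghost variations are consistent with the C-type constraint u_4 = (1/4)u_{1xxx} − (3/2)u_{3x}. -/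
/-! Put `p = q₁q₂`, `s = q₁ q₂ₓₓ + q₂ q₁ₓₓ` and `w = q₁ₓ q₂ₓ`. The product rule gives
`pₓₓ = s + 2w` and `q₁ q₂ₓₓₓ + q₂ q₁ₓₓₓ = sₓ − wₓ`, so the ghost variations involve `q₁` and `q₂`
only through `p`, `s` and `w`: `δu₁ = −2pₓ`, `δu₃ = 2(pₓ u₁ − p u₁ₓ) − sₓ`, and `u₂ = −u₁ₓ/2` turns
`δu₄` into `3(p u₁ₓₓ − pₓₓ u₁) + (s − w)ₓₓ`. The Wronskian identity
`(pₓ u₁ − p u₁ₓ)ₓ = pₓₓ u₁ − p u₁ₓₓ` matches the terms with `u₁` in the constraint, and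
`s − w = −(s + 2w)/2 + 3s/2` matches the others. -/

section Leibniz

variable {𝕜 A : Type*} [NontriviallyNormedField 𝕜] [NormedCommRing A] [NormedAlgebra 𝕜 A]
  {f g : 𝕜 → A}

theorem deriv_deriv_fun_mul (hf : ContDiff 𝕜 2 f) (hg : ContDiff 𝕜 2 g) :
    deriv (deriv fun y => f y * g y) = fun x =>
      (f x * deriv (deriv g) x + g x * deriv (deriv f) x) + 2 * (deriv f x * deriv g x) := by
  funext x
  have leibniz := iteratedDeriv_fun_mul (x := x) hf.contDiffAt hg.contDiffAt
  simp only [Finset.sum_range_succ, Finset.sum_range_zero, iteratedDeriv_succ, iteratedDeriv_zero,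
    Nat.choose_zero_right, Nat.choose_succ_self_right, Nat.choose_self, Nat.reduceAdd, tsub_self,
    Nat.cast_one, Nat.cast_ofNat, one_mul, zero_add] at leibniz
  linear_combination leibniz

theorem mul_deriv_three_add_mul_deriv_three (hf : ContDiff 𝕜 3 f) (hg : ContDiff 𝕜 3 g) :
    (fun x => f x * deriv (deriv (deriv g)) x + g x * deriv (deriv (deriv f)) x) = fun x =>
      deriv (fun y => f y * deriv (deriv g) y + g y * deriv (deriv f) y) x -
        deriv (fun y => deriv f y * deriv g y) x := by
  funext x
  have hf' : ContDiff 𝕜 2 (deriv f) := hf.deriv'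
  have hg' : ContDiff 𝕜 2 (deriv g) := hg.deriv'
  have f₀ : DifferentiableAt 𝕜 f x := hf.differentiable three_ne_zero x
  have g₀ : DifferentiableAt 𝕜 g x := hg.differentiable three_ne_zero x
  have f₁ : DifferentiableAt 𝕜 (deriv f) x := hf'.differentiable two_ne_zero x
  have g₁ : DifferentiableAt 𝕜 (deriv g) x := hg'.differentiable two_ne_zero x
  have f₂ : DifferentiableAt 𝕜 (deriv (deriv f)) x := hf'.differentiable_deriv_two x
  have g₂ : DifferentiableAt 𝕜 (deriv (deriv g)) x := hg'.differentiable_deriv_two x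
  rw [deriv_fun_add (f₀.fun_mul g₂) (g₀.fun_mul f₂), deriv_fun_mul f₀ g₂, deriv_fun_mul g₀ f₂,
    deriv_fun_mul f₁ g₁]
  ring

end Leibniz

section SecondOrder

variable {𝕜 A : Type*} [NontriviallyNormedField 𝕜] [NormedRing A] [NormedAlgebra 𝕜 A]
  {f g : 𝕜 → A}

theorem deriv_deriv_add_const_mul (hf : ContDiff 𝕜 2 f) (hg : ContDiff 𝕜 2 g) (c : A) :
    deriv (deriv fun y => f y + c * g y) = fun x => deriv (deriv f) x + c * deriv (deriv g) x := by
  have f₀ : Differentiable 𝕜 f := hf.differentiable two_ne_zero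
  have g₀ : Differentiable 𝕜 g := hg.differentiable two_ne_zero
  have f₁ : Differentiable 𝕜 (deriv f) := hf.differentiable_deriv_two
  have g₁ : Differentiable 𝕜 (deriv g) := hg.differentiable_deriv_two
  have first_deriv : deriv (fun y => f y + c * g y) = fun y => deriv f y + c * deriv g y :=
    funext fun y => by rw [deriv_fun_add (f₀ y) ((g₀ y).const_mul c), deriv_const_mul c (g₀ y)]
  funext x
  rw [first_deriv, deriv_fun_add (f₁ x) ((g₁ x).const_mul c), deriv_const_mul c (g₁ x)]

theorem hasDerivAt_wronskian (hf : ContDiff 𝕜 2 f) (hg : ContDiff 𝕜 2 g) (x : 𝕜) :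
    HasDerivAt (fun y => deriv f y * g y - f y * deriv g y)
      (deriv (deriv f) x * g x - f x * deriv (deriv g) x) x := by
  have f₀ : HasDerivAt f (deriv f x) x := (hf.differentiable two_ne_zero x).hasDerivAt
  have g₀ : HasDerivAt g (deriv g x) x := (hg.differentiable two_ne_zero x).hasDerivAt
  have f₁ : HasDerivAt (deriv f) (deriv (deriv f) x) x := (hf.differentiable_deriv_two x).hasDerivAt
  have g₁ : HasDerivAt (deriv g) (deriv (deriv g) x) x := (hg.differentiable_deriv_two x).hasDerivAt
  simpa only [add_comm (deriv f x * deriv g x), add_sub_add_right_eq_sub] using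
    (f₁.fun_mul g₀).fun_sub (f₀.fun_mul g₁)

theorem deriv_ghost_u3_eq {p s u : 𝕜 → A} (hp : ContDiff 𝕜 2 p) (hs : ContDiff 𝕜 2 s)
    (hu : ContDiff 𝕜 2 u) (x : 𝕜) :
    deriv (fun y => 2 * deriv p y * u y - 2 * p y * deriv u y - deriv s y) x =
      2 * (deriv (deriv p) x * u x - p x * deriv (deriv u) x) - deriv (deriv s) x := by
  simp only [mul_assoc, ← mul_sub]
  exact (((hasDerivAt_wronskian hp hu x).const_mul 2).fun_sub
    (hs.differentiable_deriv_two x).hasDerivAt).deriv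

end SecondOrder

section GhostVariation

variable {𝕜 F : Type*} [NontriviallyNormedField 𝕜] [NormedField F] [NormedAlgebra 𝕜 F]
  [NeZero (2 : F)]

-- `u` and `v` stand for `u₁` and `u₂`, and `t` for `q₁ q₂ₓₓₓ + q₂ q₁ₓₓₓ`.
variable {p s w t u v : 𝕜 → F}

theorem ghost_u4_eq_wronskian_add_deriv_deriv (hp : ContDiff 𝕜 2 p) (hs : ContDiff 𝕜 2 s)
    (hw : ContDiff 𝕜 2 w) (hu : ContDiff 𝕜 2 u) (hpxx : deriv (deriv p) = fun x => s x + 2 * w x)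
    (ht : t = fun x => deriv s x - deriv w x) (hv : v = fun x => -(1 / 2) * deriv u x) (x : 𝕜) :
    4 * deriv p x * v x - 2 * p x * deriv v x - 3 * s x * u x - 6 * w x * u x +
        2 * deriv (fun y => p y * deriv u y) x + deriv t x =
      3 * (p x * deriv (deriv u) x - deriv (deriv p) x * u x) +
        (deriv (deriv s) x - deriv (deriv w) x) := by
  have two_mul_half : (2 : F) * (1 / 2) = 1 := mul_one_div_cancel two_ne_zero
  have flux : deriv (fun y => p y * deriv u y) x =
      deriv p x * deriv u x + p x * deriv (deriv u) x :=
    deriv_fun_mul (hp.differentiable two_ne_zero x) (hu.differentiable_deriv_two x)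
  rw [flux, ht, hv, hpxx, deriv_const_mul_field,
    deriv_fun_sub (hs.differentiable_deriv_two x) (hw.differentiable_deriv_two x)]
  linear_combination (p x * deriv (deriv u) x - 2 * deriv p x * deriv u x) * two_mul_half

theorem ghost_u4_constraint_of_densities (hp : ContDiff 𝕜 2 p) (hs : ContDiff 𝕜 2 s)
    (hw : ContDiff 𝕜 2 w) (hu : ContDiff 𝕜 2 u) (hpxx : deriv (deriv p) = fun x => s x + 2 * w x)
    (ht : t = fun x => deriv s x - deriv w x) (hv : v = fun x => -(1 / 2) * deriv u x) (x : 𝕜) :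
    4 * deriv p x * v x - 2 * p x * deriv v x - 3 * s x * u x - 6 * w x * u x +
        2 * deriv (fun y => p y * deriv u y) x + deriv t x =
      1 / 4 * deriv (deriv (deriv fun y => -2 * deriv p y)) x -
        3 / 2 * deriv (fun y => 2 * deriv p y * u y - 2 * p y * deriv u y - deriv s y) x := by
  have two_ne : (2 : F) ≠ 0 := two_ne_zero
  have four_ne : (4 : F) ≠ 0 := by
    rw [show (4 : F) = 2 * 2 by norm_num]
    exact mul_ne_zero two_ne two_ne
  have deriv_three_ghost_u1 : deriv (deriv (deriv fun y => -2 * deriv p y)) x =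
      -2 * (deriv (deriv s) x + 2 * deriv (deriv w) x) := by
    simp only [deriv_const_mul_field', hpxx, deriv_deriv_add_const_mul hs hw]
  rw [ghost_u4_eq_wronskian_add_deriv_deriv hp hs hw hu hpxx ht hv, deriv_three_ghost_u1,
    deriv_ghost_u3_eq hp hs hu]
  field_simp
  ring

theorem ghost_variation_u4_consistent_general (q₁ q₂ u₁ : 𝕜 → F)
    (hq₁ : ContDiff 𝕜 4 q₁) (hq₂ : ContDiff 𝕜 4 q₂) (hu₁ : ContDiff 𝕜 2 u₁)
    (u₂ : 𝕜 → F) (hu₂ : u₂ = fun x => -(1 / 2) * deriv u₁ x)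
    (δu₁ δu₃ δu₄ : 𝕜 → F)
    (hδu₁ : δu₁ = fun x => -2 * deriv (fun y => q₁ y * q₂ y) x)
    (hδu₃ : δu₃ = fun x =>
      2 * deriv (fun y => q₁ y * q₂ y) x * u₁ x - 2 * (q₁ x * q₂ x) * deriv u₁ x
        - deriv (fun y => q₁ y * deriv (deriv q₂) y + q₂ y * deriv (deriv q₁) y) x)
    (hδu₄ : δu₄ = fun x =>
      4 * deriv (fun y => q₁ y * q₂ y) x * u₂ x - 2 * (q₁ x * q₂ x) * deriv u₂ x
        - 3 * (q₂ x * deriv (deriv q₁) x + q₁ x * deriv (deriv q₂) x) * u₁ x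
        - 6 * (deriv q₁ x * deriv q₂ x) * u₁ x
        + 2 * deriv (fun y => q₁ y * q₂ y * deriv u₁ y) x
        + deriv (fun y => q₁ y * deriv (deriv (deriv q₂)) y
            + q₂ y * deriv (deriv (deriv q₁)) y) x) :
    δu₄ = fun x => (1 / 4) * deriv (deriv (deriv δu₁)) x - (3 / 2) * deriv δu₃ x := by
  have hq₁' : ContDiff 𝕜 3 (deriv q₁) := hq₁.deriv'
  have hq₂' : ContDiff 𝕜 3 (deriv q₂) := hq₂.deriv'
  have hq₁'' : ContDiff 𝕜 2 (deriv (deriv q₁)) := hq₁'.deriv'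
  have hq₂'' : ContDiff 𝕜 2 (deriv (deriv q₂)) := hq₂'.deriv'
  have hp : ContDiff 𝕜 2 fun y => q₁ y * q₂ y := (hq₁.mul hq₂).of_le (by norm_num)
  have hs : ContDiff 𝕜 2 fun y => q₁ y * deriv (deriv q₂) y + q₂ y * deriv (deriv q₁) y :=
    ((hq₁.of_le (by norm_num)).mul hq₂'').add ((hq₂.of_le (by norm_num)).mul hq₁'')
  have hw : ContDiff 𝕜 2 fun y => deriv q₁ y * deriv q₂ y := (hq₁'.mul hq₂').of_le (by norm_num)
  have hpxx := deriv_deriv_fun_mul (hq₁.of_le (by norm_num)) (hq₂.of_le (by norm_num))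
  have ht := mul_deriv_three_add_mul_deriv_three (hq₁.of_le (by norm_num)) (hq₂.of_le (by norm_num))
  funext x
  rw [hδu₄, hδu₁, hδu₃, ← ghost_u4_constraint_of_densities hp hs hw hu₁ hpxx ht hu₂ x]
  ring

end GhostVariation

/-- Let `q₁, q₂, u₁` be smooth functions of `x`, let
`u₂ = −(1/2)u₁ₓ` (the C-type constraint), and define the ghost variations
`δu₁ = −2(q₁q₂)ₓ`,
`δu₃ = 2(q₁q₂)ₓ u₁ − 2 q₁q₂ u₁ₓ − (q₁ q₂ₓₓ + q₂ q₁ₓₓ)ₓ`, and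
`δu₄ = 4(q₁q₂)ₓ u₂ − 2 q₁q₂ u₂ₓ − 3(q₂ q₁ₓₓ + q₁ q₂ₓₓ) u₁ − 6 q₁ₓ q₂ₓ u₁
        + 2(q₁ q₂ u₁ₓ)ₓ + (q₁ q₂ₓₓₓ + q₂ q₁ₓₓₓ)ₓ`.
Then `δu₄ = (1/4)(δu₁)ₓₓₓ − (3/2)(δu₃)ₓ`: the ghost variations are consistent with
the C-type constraint `u₄ = (1/4)u₁ₓₓₓ − (3/2)u₃ₓ`. -/
theorem ghost_variation_u4_consistent
    (q₁ q₂ u₁ : ℝ → ℝ)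
    (hq₁ : ContDiff ℝ (⊤ : ℕ∞) q₁) (hq₂ : ContDiff ℝ (⊤ : ℕ∞) q₂) (hu₁ : ContDiff ℝ (⊤ : ℕ∞) u₁)
    (u₂ : ℝ → ℝ) (hu₂ : u₂ = fun x => -(1/2) * deriv u₁ x)
    (δu₁ δu₃ δu₄ : ℝ → ℝ)
    (hδu₁ : δu₁ = fun x => -2 * deriv (fun y => q₁ y * q₂ y) x)
    (hδu₃ : δu₃ = fun x =>
      2 * deriv (fun y => q₁ y * q₂ y) x * u₁ x - 2 * (q₁ x * q₂ x) * deriv u₁ x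
        - deriv (fun y => q₁ y * deriv (deriv q₂) y + q₂ y * deriv (deriv q₁) y) x)
    (hδu₄ : δu₄ = fun x =>
      4 * deriv (fun y => q₁ y * q₂ y) x * u₂ x - 2 * (q₁ x * q₂ x) * deriv u₂ x
        - 3 * (q₂ x * deriv (deriv q₁) x + q₁ x * deriv (deriv q₂) x) * u₁ x
        - 6 * (deriv q₁ x * deriv q₂ x) * u₁ x
        + 2 * deriv (fun y => q₁ y * q₂ y * deriv u₁ y) x
        + deriv (fun y => q₁ y * deriv (deriv (deriv q₂)) y
            + q₂ y * deriv (deriv (deriv q₁)) y) x) :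
    δu₄ = fun x => (1/4) * deriv (deriv (deriv δu₁)) x - (3/2) * deriv δu₃ x :=
  ghost_variation_u4_consistent_general q₁ q₂ u₁ (contDiff_infty.mp hq₁ 4) (contDiff_infty.mp hq₂ 4)
    (contDiff_infty.mp hu₁ 2) u₂ hu₂ δu₁ δu₃ δu₄ hδu₁ hδu₃ hδu₄
end

section
/- Let q be a smooth function of (x, t_5) and set u_1 = 2q² and u_3 = 2 q q_{xx}. If ∂_{t_5} q = q_{xxxxx} + 5 u_1 q_{xxx} + (15/2) u_{1x} q_{xx} + (5 u_3 + 10 u_1² + 5 u_{1xx}) q_x + ((5/4) u_{1xxx} + (5/2) u_{3x} + 10 u_1 u_{1x}) q, then q satisfies the fifth-order mKdV equation ∂_{t_5} q = q_{xxxxx} + 20 q² q_{xxx} + 80 q_{xx} q_x q + 20 q_x³ + 120 q⁴ q_x. -/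
/-!
Only the terms of the `t₅`-flow that contain `u₁` and `u₃` change under the symmetry constraint.
By the Leibniz rule their `x`-derivatives, at most third order for `u₁ = 2q²` and first order
for `u₃ = 2 q qₓₓ`, are polynomials in `q, qₓ, qₓₓ, qₓₓₓ`, and collecting monomials gives the
fifth-order mKdV equation.
-/

section Leibniz

variable {𝕜 𝔸 : Type*} [NontriviallyNormedField 𝕜] [NormedCommRing 𝔸] [NormedAlgebra 𝕜 𝔸]
  {f : 𝕜 → 𝔸} {x : 𝕜}

theorem iteratedDeriv_const_mul_sq {n : ℕ} (c : 𝔸) (hf : ContDiffAt 𝕜 n f x) :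
    iteratedDeriv n (fun y => c * f y ^ 2) x =
      c * ∑ i ∈ Finset.range (n + 1),
        n.choose i * iteratedDeriv i f x * iteratedDeriv (n - i) f x := by
  rw [iteratedDeriv_const_mul c (hf.pow 2), ← iteratedDeriv_mul hf hf, ← pow_two]
  rfl

theorem deriv_const_mul_sq (c : 𝔸) (hf : DifferentiableAt 𝕜 f x) :
    deriv (fun y => c * f y ^ 2) x = 2 * c * (f x * deriv f x) := by
  refine ((hf.hasDerivAt.pow 2).const_mul c).deriv.trans ?_
  push_cast
  ring

theorem deriv_deriv_const_mul_sq (c : 𝔸) (hf : ContDiffAt 𝕜 2 f x) :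
    deriv (deriv fun y => c * f y ^ 2) x =
      2 * c * (deriv f x ^ 2 + f x * deriv (deriv f) x) := by
  have leibniz := iteratedDeriv_const_mul_sq (n := 2) c hf
  simp only [iteratedDeriv_eq_iterate, Function.iterate_succ_apply, Function.iterate_zero_apply,
    Finset.sum_range_succ, Finset.sum_range_zero, Nat.choose, Nat.sub_self] at leibniz
  rw [leibniz]
  push_cast
  ring

theorem deriv_deriv_deriv_const_mul_sq (c : 𝔸) (hf : ContDiffAt 𝕜 3 f x) :
    deriv (deriv (deriv fun y => c * f y ^ 2)) x =
      2 * c * (3 * deriv f x * deriv (deriv f) x + f x * deriv (deriv (deriv f)) x) := by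
  have leibniz := iteratedDeriv_const_mul_sq (n := 3) c hf
  simp only [iteratedDeriv_eq_iterate, Function.iterate_succ_apply, Function.iterate_zero_apply,
    Finset.sum_range_succ, Finset.sum_range_zero, Nat.choose, Nat.sub_self] at leibniz
  rw [leibniz]
  push_cast
  ring

end Leibniz

section Flows

variable {𝕜 𝔽 : Type*} [NontriviallyNormedField 𝕜] [NormedField 𝔽] [NormedAlgebra 𝕜 𝔽]

/-- The value at `x` of `(L⁵)₊(f)`, the velocity of an eigenfunction `f` under the `t₅`-flow of the
CKP hierarchy. The coefficients `u₂` and `u₄` of `L` are eliminated by means of `L* = -L`. -/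
noncomputable def ckpFifthFlow (u₁ u₃ f : 𝕜 → 𝔽) (x : 𝕜) : 𝔽 :=
  deriv (deriv (deriv (deriv (deriv f)))) x
    + 5 * u₁ x * deriv (deriv (deriv f)) x
    + (15 / 2) * deriv u₁ x * deriv (deriv f) x
    + (5 * u₃ x + 10 * (u₁ x) ^ 2 + 5 * deriv (deriv u₁) x) * deriv f x
    + ((5 / 4) * deriv (deriv (deriv u₁)) x + (5 / 2) * deriv u₃ x
        + 10 * u₁ x * deriv u₁ x) * f x

/-- The right-hand side, at the point `x`, of the fifth-order mKdV equation for `f`, in the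
normalization where the `f² f‴` term has coefficient `20`. -/
noncomputable def mkdvFifthFlow (f : 𝕜 → 𝔽) (x : 𝕜) : 𝔽 :=
  deriv (deriv (deriv (deriv (deriv f)))) x
    + 20 * (f x) ^ 2 * deriv (deriv (deriv f)) x
    + 80 * deriv (deriv f) x * deriv f x * f x
    + 20 * (deriv f x) ^ 3
    + 120 * (f x) ^ 4 * deriv f x

variable [NeZero (2 : 𝔽)]

theorem ckpFifthFlow_symmetryConstraint {f : 𝕜 → 𝔽} {x : 𝕜} (hf : ContDiffAt 𝕜 3 f x) :
    ckpFifthFlow (fun y => 2 * f y ^ 2) (fun y => 2 * f y * deriv (deriv f) y) f x =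
      mkdvFifthFlow f x := by
  have hf₀ : DifferentiableAt 𝕜 f x := hf.differentiableAt (by norm_num)
  have hf₁ : ContDiffAt 𝕜 2 (deriv f) x := hf.derivWithin (by norm_num)
  have hf₂ : DifferentiableAt 𝕜 (deriv (deriv f)) x :=
    (hf₁.derivWithin (m := 1) (by norm_num)).differentiableAt one_ne_zero
  have u₃_deriv : deriv (fun y => 2 * f y * deriv (deriv f) y) x =
      2 * deriv f x * deriv (deriv f) x + 2 * f x * deriv (deriv (deriv f)) x :=
    ((hf₀.hasDerivAt.const_mul 2).mul hf₂.hasDerivAt).deriv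
  have four_eq : (4 : 𝔽) = 2 ^ 2 := by norm_num
  rw [ckpFifthFlow, mkdvFifthFlow, deriv_const_mul_sq 2 hf₀,
    deriv_deriv_const_mul_sq 2 (hf.of_le (by norm_num)), deriv_deriv_deriv_const_mul_sq 2 hf,
    u₃_deriv, four_eq]
  field_simp
  ring

theorem ckp_symmetry_constraint_mkdv5_general {q : 𝕜 → 𝕜 → 𝔽} {u₁ u₃ : 𝕜 → 𝕜 → 𝔽} {t x : 𝕜}
    (hq : ContDiffAt 𝕜 5 (q t) x)
    (hu₁ : u₁ t = fun y => 2 * q t y ^ 2)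
    (hu₃ : u₃ t = fun y => 2 * q t y * deriv (deriv (q t)) y)
    (hflow : HasDerivAt (fun s => q s x) (ckpFifthFlow (u₁ t) (u₃ t) (q t) x) t) :
    HasDerivAt (fun s => q s x) (mkdvFifthFlow (q t) x) t := by
  rwa [hu₁, hu₃, ckpFifthFlow_symmetryConstraint (hq.of_le (by norm_num))] at hflow

end Flows

/-- Let `q` be a smooth function of `(t₅, x)` (written `q t x`)
and set `u₁ = 2q²`, `u₃ = 2 q qₓₓ` (the symmetry constraint `∂_α = −∂ₓ` of the CKP
hierarchy with `q₁ = q₂ = q`). If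
`∂ₜ₅ q = qₓₓₓₓₓ + 5u₁ qₓₓₓ + (15/2)u₁ₓ qₓₓ + (5u₃ + 10u₁² + 5u₁ₓₓ) qₓ
          + ((5/4)u₁ₓₓₓ + (5/2)u₃ₓ + 10u₁u₁ₓ) q`,
then `q` satisfies the fifth-order mKdV equation
`∂ₜ₅ q = qₓₓₓₓₓ + 20q² qₓₓₓ + 80 qₓₓ qₓ q + 20 qₓ³ + 120 q⁴ qₓ`. -/
theorem ckp_symmetry_constraint_mkdv5
    (q : ℝ → ℝ → ℝ) (hq : ContDiff ℝ (⊤ : ℕ∞) (Function.uncurry q))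
    (u₁ u₃ : ℝ → ℝ → ℝ)
    (hu₁ : u₁ = fun t x => 2 * (q t x)^2)
    (hu₃ : u₃ = fun t x => 2 * q t x * deriv (deriv (q t)) x)
    (hflow : ∀ t x, deriv (fun s => q s x) t
      = deriv (deriv (deriv (deriv (deriv (q t))))) x
        + 5 * u₁ t x * deriv (deriv (deriv (q t))) x
        + (15/2) * deriv (u₁ t) x * deriv (deriv (q t)) x
        + (5 * u₃ t x + 10 * (u₁ t x)^2 + 5 * deriv (deriv (u₁ t)) x) * deriv (q t) x
        + ((5/4) * deriv (deriv (deriv (u₁ t))) x + (5/2) * deriv (u₃ t) x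
            + 10 * u₁ t x * deriv (u₁ t) x) * q t x) :
    ∀ t x, deriv (fun s => q s x) t
      = deriv (deriv (deriv (deriv (deriv (q t))))) x
        + 20 * (q t x)^2 * deriv (deriv (deriv (q t))) x
        + 80 * deriv (deriv (q t)) x * deriv (q t) x * q t x
        + 20 * (deriv (q t) x)^3
        + 120 * (q t x)^4 * deriv (q t) x := by
  intro t x
  have q_smooth_x : ContDiff ℝ (⊤ : ℕ∞) (q t) := hq.comp (contDiff_prodMk_right t)
  have q_smooth_t : ContDiff ℝ (⊤ : ℕ∞) fun s => q s x := hq.comp (contDiff_prodMk_left x)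
  have q_flow : HasDerivAt (fun s => q s x) (ckpFifthFlow (u₁ t) (u₃ t) (q t) x) t :=
    (q_smooth_t.differentiable (by simp) t).hasDerivAt.congr_deriv (hflow t x)
  exact (ckp_symmetry_constraint_mkdv5_general (contDiff_infty.1 q_smooth_x 5).contDiffAt
    (congrFun hu₁ t) (congrFun hu₃ t) q_flow).deriv
end
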